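/- Let ŵ = (x̂,û) be admissible for Problem P, δ > 0, and assume mes M_δ > 0. Let Y = R^{n*} × L^1([t0,t1],R^{m*}) × R with pairing ⟨(c0,v,r),(x0,u,q)⟩ = c0·x0 + ∫_{t0}^{t1} v(t)u(t)dt + r·q, so that X := Y* = R^n × L^∞([t0,t1],R^m) × R. Let H_δ ⊆ Y be the cone of all functionals y that act on κ = (x0,u,q) ∈ X by ⟨y,κ⟩ = −∫_{t0}^{t1} λ(t)·( G_x(ŵ(t))x(t) + G_u(ŵ(t))u(t) + q )dt, where x = A(x0,u), for some λ ∈ L^1([t0,t1],R) with λ ≥ 0 and λ = 0 a.e. outside M_δ. Then the dual cone of H_δ equals the norm-closure of Ω_δ: H_δ* = cl Ω_δ = {κ ∈ X : esssup_{t∈M_δ}(G_x(ŵ(t))x(t) + G_u(ŵ(t))u(t)) + q ≤ 0, where x = A(x0,u)}. -/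

import Mathlib

open MeasureTheory Set Filter

/-- `u` is essentially bounded on `[t0,t1]`. -/
def EssBdd (t0 t1 : ℝ) {k : ℕ} (u : ℝ → (Fin k → ℝ)) : Prop :=
  ∃ C : ℝ, ∀ᵐ t ∂(volume.restrict (Icc t0 t1)), ‖u t‖ ≤ C

/-- Admissible process of Problem P. -/
def Admissible (t0 t1 : ℝ) {n m : ℕ}
    (f : (Fin n → ℝ) → (Fin m → ℝ) → (Fin n → ℝ))
    (G : (Fin n → ℝ) → (Fin m → ℝ) → ℝ)
    (x : ℝ → (Fin n → ℝ)) (u : ℝ → (Fin m → ℝ)) : Prop :=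
  Measurable u ∧ EssBdd t0 t1 u ∧
  IntegrableOn (fun s => f (x s) (u s)) (Icc t0 t1) ∧
  (∀ t ∈ Icc t0 t1, x t = x t0 + ∫ s in Icc t0 t, f (x s) (u s)) ∧
  (∀ᵐ t ∂(volume.restrict (Icc t0 t1)), G (x t) (u t) ≤ 0)

/-- The linearized mixed-constraint expression `G_x(ŵ(t)) x(t) + G_u(ŵ(t)) u(t)`, where
`x = A(x0, u)` and `κ = (x0, u, q)`. -/
noncomputable def Gexpr {n m : ℕ}
    (G : (Fin n → ℝ) → (Fin m → ℝ) → ℝ)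
    (xh : ℝ → (Fin n → ℝ)) (uh : ℝ → (Fin m → ℝ))
    (A : (Fin n → ℝ) → (ℝ → (Fin m → ℝ)) → ℝ → (Fin n → ℝ))
    (κ : (Fin n → ℝ) × (ℝ → (Fin m → ℝ)) × ℝ) (t : ℝ) : ℝ :=
  (fderiv ℝ (fun x' => G x' (uh t)) (xh t)) (A κ.1 κ.2.1 t)
    + (fderiv ℝ (fun u' => G (xh t) u') (uh t)) (κ.2.1 t)

/-- The open cone `Ω_δ ⊆ X = ℝⁿ × L^∞ × ℝ`:
`esssup_{t ∈ M_δ} (G_x(ŵ)x + G_u(ŵ)u) + q < 0` where `x = A(x0,u)`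
(expressed by an a.e. upper bound `c` with `c + q < 0`). -/
noncomputable def OmegaDelta {n m : ℕ} (t0 t1 : ℝ)
    (G : (Fin n → ℝ) → (Fin m → ℝ) → ℝ)
    (xh : ℝ → (Fin n → ℝ)) (uh : ℝ → (Fin m → ℝ))
    (A : (Fin n → ℝ) → (ℝ → (Fin m → ℝ)) → ℝ → (Fin n → ℝ))
    (Mδ : Set ℝ) : Set ((Fin n → ℝ) × (ℝ → (Fin m → ℝ)) × ℝ) :=
  {κ | Measurable κ.2.1 ∧ EssBdd t0 t1 κ.2.1 ∧
    ∃ c : ℝ, c + κ.2.2 < 0 ∧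
      ∀ᵐ t ∂(volume.restrict Mδ), Gexpr G xh uh A κ t ≤ c}

/-!
An integrable function is a.e. nonpositive on `M` as soon as its integral against every density
`λ ≥ 0` supported on `M` is nonpositive: test with indicators. Applied to
`G_x(ŵ)x + G_u(ŵ)u + q`, this identifies `H_δ*`.

For the closure, lowering `q` by an arbitrarily small amount moves a point satisfying the weak
inequality into `Ω_δ`; conversely the weak inequality survives limits because Grönwall's inequality
makes `(x0,u) ↦ G_x(ŵ)x + G_u(ŵ)u` Lipschitz from `ℝⁿ × L^∞` to `L^∞`.

`A` is specified only by its integral equation, and a Bochner integral of a non-integrable function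
is `0`. The right-hand side is nevertheless integrable: the solution is measurable because it is
continuous up to the time at which integrability fails and constant after it, and it is bounded by
Grönwall's inequality before that time.
-/

section DualityWithNonnegativeDensities

variable {α : Type*} [MeasurableSpace α] {μ : Measure α} {M : Set α} {p : α → ℝ}

lemma integral_mul_nonpos_of_ae_restrict_nonpos (hM : NullMeasurableSet M μ)
    (hp : ∀ᵐ t ∂(μ.restrict M), p t ≤ 0) {lam : α → ℝ} (hlam : ∀ᵐ t ∂μ, 0 ≤ lam t)
    (hlam_off : ∀ᵐ t ∂μ, t ∉ M → lam t = 0) : ∫ t, lam t * p t ∂μ ≤ 0 := by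
  refine integral_nonpos_of_ae ?_
  filter_upwards [hlam, hlam_off, (ae_restrict_iff'₀ hM).1 hp] with t hnonneg hoff hpt
  by_cases htM : t ∈ M
  · exact mul_nonpos_of_nonneg_of_nonpos hnonneg (hpt htM)
  · simp [hoff htM]

lemma ae_restrict_nonpos_of_forall_integral_mul_nonpos [IsFiniteMeasure μ]
    (hM : NullMeasurableSet M μ) (hp : Integrable p μ)
    (h : ∀ lam : α → ℝ, Integrable lam μ → (∀ᵐ t ∂μ, 0 ≤ lam t) →
      (∀ᵐ t ∂μ, t ∉ M → lam t = 0) → ∫ t, lam t * p t ∂μ ≤ 0) :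
    ∀ᵐ t ∂(μ.restrict M), p t ≤ 0 := by
  have hneg : 0 ≤ᵐ[μ.restrict M] -p := by
    refine ae_nonneg_restrict_of_forall_setIntegral_nonneg_inter hp.neg.integrableOn
      fun s hs _ => ?_
    have hsM : NullMeasurableSet (s ∩ M) μ := hs.nullMeasurableSet.inter hM
    have hint := h ((s ∩ M).indicator 1) ((integrable_const 1).indicator₀ hsM)
      (ae_of_all _ fun t => indicator_nonneg (fun _ _ => zero_le_one) t)
      (ae_of_all _ fun t ht => indicator_of_notMem (fun hts => ht hts.2) _)
    simp only [← indicator_mul_left, Pi.one_apply, one_mul] at hint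
    rw [integral_indicator₀ hsM] at hint
    simpa only [Pi.neg_apply, integral_neg, neg_nonneg] using hint
  filter_upwards [hneg] with t ht
  exact neg_nonneg.1 ht

lemma ae_nonpos_of_forall_pos_ae_le_mul (C : ℝ) (h : ∀ ε > (0 : ℝ), ∀ᵐ t ∂μ, p t ≤ C * ε) :
    ∀ᵐ t ∂μ, p t ≤ 0 := by
  filter_upwards [ae_all_iff.2 fun k : ℕ => h (1 / ((k : ℝ) + 1)) Nat.one_div_pos_of_nat] with t ht
  have hlim := (tendsto_one_div_add_atTop_nhds_zero_nat (𝕜 := ℝ)).const_mul C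
  rw [mul_zero] at hlim
  exact ge_of_tendsto' hlim ht

end DualityWithNonnegativeDensities

section EssentiallyBoundedCoefficients

variable {α E F Z : Type*} [MeasurableSpace α] {μ : Measure α}
  [NormedAddCommGroup E] [NormedAddCommGroup F] [NormedAddCommGroup Z] {x : α → E} {u : α → F}

lemma memLp_top_comp_prodMk [ProperSpace E] [ProperSpace F] {Φ : E × F → Z} (hΦ : Continuous Φ)
    (hx : MemLp x ⊤ μ) (hu : MemLp u ⊤ μ) : MemLp (fun t => Φ (x t, u t)) ⊤ μ := by
  obtain ⟨K, hK⟩ := ((isCompact_closedBall (0 : E) (lpNorm x ⊤ μ)).prod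
    (isCompact_closedBall (0 : F) (lpNorm u ⊤ μ))).exists_bound_of_continuousOn hΦ.continuousOn
  refine memLp_top_of_bound (hΦ.comp_aestronglyMeasurable (hx.1.prodMk hu.1)) K ?_
  filter_upwards [ae_le_lpNorm_exponent_top hx, ae_le_lpNorm_exponent_top hu] with t hxt hut
  exact hK _ ⟨mem_closedBall_zero_iff.2 hxt, mem_closedBall_zero_iff.2 hut⟩

variable [NormedSpace ℝ E] [NormedSpace ℝ F] [NormedSpace ℝ Z]

lemma memLp_top_clm_apply {a : α → E →L[ℝ] Z} (ha : MemLp a ⊤ μ) (hx : MemLp x ⊤ μ) :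
    MemLp (fun t => a t (x t)) ⊤ μ :=
  (ContinuousLinearMap.id ℝ (E →L[ℝ] Z)).memLp_of_bilin ⊤ ha hx

variable [ProperSpace E] [ProperSpace F] {Φ : E → F → Z}

lemma memLp_top_fderiv_fst (hΦ : ContDiff ℝ 1 fun q : E × F => Φ q.1 q.2)
    (hx : MemLp x ⊤ μ) (hu : MemLp u ⊤ μ) :
    MemLp (fun t => fderiv ℝ (fun x' => Φ x' (u t)) (x t)) ⊤ μ := by
  have hcont : Continuous fun q : E × F => fderiv ℝ (fun x' => Φ x' q.2) q.1 :=
    Continuous.fderiv (f := fun (q : E × F) x' => Φ x' q.2)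
      (hΦ.comp (contDiff_snd.prodMk contDiff_fst.snd)) continuous_fst le_rfl
  exact memLp_top_comp_prodMk hcont hx hu

lemma memLp_top_fderiv_snd (hΦ : ContDiff ℝ 1 fun q : E × F => Φ q.1 q.2)
    (hx : MemLp x ⊤ μ) (hu : MemLp u ⊤ μ) :
    MemLp (fun t => fderiv ℝ (fun u' => Φ (x t) u') (u t)) ⊤ μ := by
  have hcont : Continuous fun q : E × F => fderiv ℝ (fun u' => Φ q.1 u') q.2 :=
    Continuous.fderiv (f := fun (q : E × F) u' => Φ q.1 u')
      (hΦ.comp (contDiff_fst.fst.prodMk contDiff_snd)) continuous_snd le_rfl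
  exact memLp_top_comp_prodMk hcont hx hu

end EssentiallyBoundedCoefficients

lemma le_mul_exp_of_le_add_integral {a b c K : ℝ} (hK : 0 ≤ K) {y : ℝ → ℝ}
    (hy : ContinuousOn y (Icc a b)) (h : ∀ t ∈ Icc a b, y t ≤ c + K * ∫ s in a..t, y s) :
    ∀ t ∈ Icc a b, y t ≤ c * Real.exp (K * (t - a)) := by
  intro t ht
  have hab : a ≤ b := ht.1.trans ht.2
  set φ : ℝ → ℝ := fun s => c + K * ∫ r in a..s, y r with hφ
  have hφ_cont : ContinuousOn φ (Icc a b) := by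
    refine continuousOn_const.add (continuousOn_const.mul ?_)
    rw [← uIcc_of_le hab]
    exact intervalIntegral.continuousOn_primitive_interval (uIcc_of_le hab ▸ hy.integrableOn_Icc)
  have hφ_deriv : ∀ s ∈ Ico a b, HasDerivWithinAt φ (K * y s) (Ici s) s := fun s hs => by
    have hsub : Icc a s ⊆ Icc a b := Icc_subset_Icc_right hs.2.le
    have hnhds : Ioo s b ∈ nhdsWithin s (Ioi s) := Ioo_mem_nhdsGT hs.2
    have hmeas : StronglyMeasurableAtFilter y (nhdsWithin s (Ioi s)) :=
      ⟨Ioo s b, hnhds, (hy.mono fun r hr => ⟨hs.1.trans hr.1.le, hr.2.le⟩).aestronglyMeasurable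
        measurableSet_Ioo⟩
    have hcont : ContinuousWithinAt y (Ioi s) s :=
      ((hy s (Ico_subset_Icc_self hs)).mono fun r hr =>
        ⟨hs.1.trans hr.1.le, hr.2.le⟩).mono_of_mem_nhdsWithin hnhds
    exact ((intervalIntegral.integral_hasDerivWithinAt_right
      ((hy.mono hsub).intervalIntegrable_of_Icc hs.1) hmeas hcont).const_mul K).const_add c
  have hφ_le : φ t ≤ gronwallBound c K 0 (t - a) :=
    le_gronwallBound_of_liminf_deriv_right_le hφ_cont
      (fun s hs _ hr => (hφ_deriv s hs).liminf_right_slope_le hr) (by simp [hφ])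
      (fun s hs => by
        rw [add_zero]
        exact mul_le_mul_of_nonneg_left (h s (Ico_subset_Icc_self hs)) hK) t ht
  calc y t ≤ φ t := h t ht
    _ ≤ c * Real.exp (K * (t - a)) := by rwa [gronwallBound_ε0] at hφ_le

section LinearIntegralEquation

variable {E : Type*} [NormedAddCommGroup E] [NormedSpace ℝ E]

-- It is continuous on the interval of those `t` for which `g` is integrable on `[a, t]`, and
-- vanishes elsewhere because the Bochner integral of a non-integrable function is `0`.
lemma aestronglyMeasurable_setIntegral_Icc (g : ℝ → E) (a : ℝ) {μ : Measure ℝ} :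
    AEStronglyMeasurable (fun t => ∫ s in Icc a t, g s) μ := by
  set S : Set ℝ := {t | a ≤ t ∧ IntegrableOn g (Icc a t)}
  have hSconn : S.OrdConnected := ⟨fun r hr s hs t ht =>
    ⟨hr.1.trans ht.1, hs.2.mono_set (Icc_subset_Icc_right ht.2)⟩⟩
  have hcont : ContinuousOn (fun t => ∫ s in Icc a t, g s) S := by
    intro t ht
    have hcont_below : ∀ r ∈ S, t ≤ r →
        ContinuousWithinAt (fun t => ∫ s in Icc a t, g s) (Icc a r) t := fun r hr htr =>
      intervalIntegral.continuousOn_primitive_Icc hr.2 t ⟨ht.1, htr⟩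
    by_cases hmax : ∃ r ∈ S, t < r
    · obtain ⟨r, hr, htr⟩ := hmax
      refine (hcont_below r hr htr.le).mono_of_mem_nhdsWithin ?_
      filter_upwards [self_mem_nhdsWithin, mem_nhdsWithin_of_mem_nhds (Iio_mem_nhds htr)]
        with s hs hsr
      exact ⟨hs.1, le_of_lt hsr⟩
    · push Not at hmax
      exact (hcont_below t ht le_rfl).mono fun s hs => ⟨hs.1, hmax s hs⟩
  have hoff : S.indicator (fun t => ∫ s in Icc a t, g s) = fun t => ∫ s in Icc a t, g s := by
    refine indicator_eq_self.2 fun t ht => ?_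
    by_contra htS
    refine ht ?_
    rcases lt_or_ge t a with hta | hat
    · simp [Icc_eq_empty hta.not_ge]
    · exact integral_undef fun hint => htS ⟨hat, hint⟩
  rw [← hoff, aestronglyMeasurable_indicator_iff hSconn.measurableSet]
  exact hcont.aestronglyMeasurable hSconn.measurableSet

/-- `y` solves `ẏ = a y + b`, `y(t0) = y0` on `[t0,t1]`, in integral form. Integrability of
`a y + b` is not part of the definition: where it fails, the integral is `0` by convention. -/
def IsMildSolution (t0 t1 : ℝ) (a : ℝ → E →L[ℝ] E) (b : ℝ → E) (y0 : E) (y : ℝ → E) : Prop :=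
  ∀ t ∈ Icc t0 t1, y t = y0 + ∫ s in Icc t0 t, (a s (y s) + b s)

namespace IsMildSolution

variable {t0 t1 : ℝ} {a : ℝ → E →L[ℝ] E} {b b' y y' : ℝ → E} {y0 y0' : E}

lemma aestronglyMeasurable (hy : IsMildSolution t0 t1 a b y0 y) :
    AEStronglyMeasurable y (volume.restrict (Icc t0 t1)) := by
  refine ((aestronglyMeasurable_const (b := y0)).add (aestronglyMeasurable_setIntegral_Icc
    (fun s => a s (y s) + b s) t0)).congr ?_
  filter_upwards [ae_restrict_mem measurableSet_Icc] with t ht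
  exact (hy t ht).symm

lemma norm_le_exp_of_integrableOn {T K B : ℝ} (hy : IsMildSolution t0 T a b y0 y)
    (hK : 0 ≤ K) (hB : 0 ≤ B)
    (ha : ∀ᵐ s ∂(volume.restrict (Icc t0 T)), ‖a s‖ ≤ K)
    (hb : ∀ᵐ s ∂(volume.restrict (Icc t0 T)), ‖b s‖ ≤ B)
    (hint : IntegrableOn (fun s => a s (y s) + b s) (Icc t0 T)) :
    ∀ t ∈ Icc t0 T, ‖y t‖ ≤ (‖y0‖ + B * (T - t0)) * Real.exp (K * (t - t0)) := by
  have hcont : ContinuousOn y (Icc t0 T) :=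
    (continuousOn_const.add (intervalIntegral.continuousOn_primitive_Icc hint)).congr hy
  refine le_mul_exp_of_le_add_integral hK hcont.norm fun t ht => ?_
  have hsub : Icc t0 t ⊆ Icc t0 T := Icc_subset_Icc_right ht.2
  have hnorm : IntegrableOn (fun s => K * ‖y s‖) (Icc t0 t) :=
    (continuousOn_const.mul (hcont.mono hsub).norm).integrableOn_Icc
  have hle : ‖∫ s in Icc t0 t, (a s (y s) + b s)‖ ≤ ∫ s in Icc t0 t, (K * ‖y s‖ + B) := by
    refine norm_integral_le_of_norm_le (hnorm.add (integrable_const B)) ?_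
    filter_upwards [ae_restrict_of_ae_restrict_of_subset hsub ha,
      ae_restrict_of_ae_restrict_of_subset hsub hb] with s has hbs
    exact (norm_add_le _ _).trans (add_le_add ((a s).le_of_opNorm_le has _) hbs)
  calc ‖y t‖ ≤ ‖y0‖ + ‖∫ s in Icc t0 t, (a s (y s) + b s)‖ := by
        rw [hy t ht]; exact norm_add_le _ _
    _ ≤ ‖y0‖ + ∫ s in Icc t0 t, (K * ‖y s‖ + B) := by gcongr
    _ = ‖y0‖ + B * (t - t0) + K * ∫ s in t0..t, ‖y s‖ := by
        rw [integral_add hnorm (integrable_const B), integral_const_mul,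
          integral_Icc_eq_integral_Ioc, ← intervalIntegral.integral_of_le ht.1, setIntegral_const,
          Real.volume_real_Icc_of_le ht.1, smul_eq_mul]
        ring
    _ ≤ ‖y0‖ + B * (T - t0) + K * ∫ s in t0..t, ‖y s‖ := by gcongr; exact ht.2

lemma norm_le_exp {K B : ℝ} (hy : IsMildSolution t0 t1 a b y0 y) (hK : 0 ≤ K) (hB : 0 ≤ B)
    (ha : ∀ᵐ s ∂(volume.restrict (Icc t0 t1)), ‖a s‖ ≤ K)
    (hb : ∀ᵐ s ∂(volume.restrict (Icc t0 t1)), ‖b s‖ ≤ B) {t : ℝ} (ht : t ∈ Icc t0 t1) :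
    ‖y t‖ ≤ (‖y0‖ + B * (t1 - t0)) * Real.exp (K * (t1 - t0)) := by
  have hsub : Icc t0 t ⊆ Icc t0 t1 := Icc_subset_Icc_right ht.2
  have hy0 : ‖y0‖ ≤ ‖y0‖ + B * (t1 - t0) :=
    le_add_of_nonneg_right (mul_nonneg hB (sub_nonneg.2 (ht.1.trans ht.2)))
  by_cases hint : IntegrableOn (fun s => a s (y s) + b s) (Icc t0 t)
  · have hyt : IsMildSolution t0 t a b y0 y := fun s hs => hy s (hsub hs)
    have hbound := hyt.norm_le_exp_of_integrableOn hK hB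
      (ae_restrict_of_ae_restrict_of_subset hsub ha)
      (ae_restrict_of_ae_restrict_of_subset hsub hb) hint t ⟨ht.1, le_rfl⟩
    refine hbound.trans ?_
    gcongr
    exacts [(norm_nonneg _).trans hy0, ht.2, ht.2]
  · rw [hy t ht, integral_undef hint, add_zero]
    exact hy0.trans (le_mul_of_one_le_right ((norm_nonneg _).trans hy0)
      (Real.one_le_exp (mul_nonneg hK (sub_nonneg.2 (ht.1.trans ht.2)))))

lemma memLp_top (hy : IsMildSolution t0 t1 a b y0 y)
    (ha : MemLp a ⊤ (volume.restrict (Icc t0 t1)))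
    (hb : MemLp b ⊤ (volume.restrict (Icc t0 t1))) :
    MemLp y ⊤ (volume.restrict (Icc t0 t1)) := by
  refine memLp_top_of_bound hy.aestronglyMeasurable
    ((‖y0‖ + lpNorm b ⊤ (volume.restrict (Icc t0 t1)) * (t1 - t0))
      * Real.exp (lpNorm a ⊤ (volume.restrict (Icc t0 t1)) * (t1 - t0))) ?_
  filter_upwards [ae_restrict_mem measurableSet_Icc] with t ht
  exact hy.norm_le_exp lpNorm_nonneg lpNorm_nonneg (ae_le_lpNorm_exponent_top ha)
    (ae_le_lpNorm_exponent_top hb) ht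

lemma integrableOn (hy : IsMildSolution t0 t1 a b y0 y)
    (ha : MemLp a ⊤ (volume.restrict (Icc t0 t1)))
    (hb : MemLp b ⊤ (volume.restrict (Icc t0 t1))) :
    IntegrableOn (fun s => a s (y s) + b s) (Icc t0 t1) :=
  ((memLp_top_clm_apply ha (hy.memLp_top ha hb)).add hb).integrable le_top

lemma sub (hy : IsMildSolution t0 t1 a b y0 y) (hy' : IsMildSolution t0 t1 a b' y0' y')
    (ha : MemLp a ⊤ (volume.restrict (Icc t0 t1)))
    (hb : MemLp b ⊤ (volume.restrict (Icc t0 t1)))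
    (hb' : MemLp b' ⊤ (volume.restrict (Icc t0 t1))) :
    IsMildSolution t0 t1 a (b - b') (y0 - y0') (y - y') := by
  intro t ht
  have hsub : Icc t0 t ⊆ Icc t0 t1 := Icc_subset_Icc_right ht.2
  have hintegrand : (fun s => a s ((y - y') s) + (b - b') s)
      = fun s => (a s (y s) + b s) - (a s (y' s) + b' s) := by
    ext s
    simp only [Pi.sub_apply, map_sub]
    abel
  rw [hintegrand, integral_sub ((hy.integrableOn ha hb).mono_set hsub)
    ((hy'.integrableOn ha hb').mono_set hsub), Pi.sub_apply, hy t ht, hy' t ht]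
  abel

end IsMildSolution

lemma exists_ae_norm_output_le_mul {F Z : Type*} [NormedAddCommGroup F] [NormedSpace ℝ F]
    [NormedAddCommGroup Z] [NormedSpace ℝ Z] {t0 t1 : ℝ} {a : ℝ → E →L[ℝ] E}
    {b : ℝ → F →L[ℝ] E} {c : ℝ → E →L[ℝ] Z} {d : ℝ → F →L[ℝ] Z}
    (ha : MemLp a ⊤ (volume.restrict (Icc t0 t1))) (hb : MemLp b ⊤ (volume.restrict (Icc t0 t1)))
    (hc : MemLp c ⊤ (volume.restrict (Icc t0 t1)))
    (hd : MemLp d ⊤ (volume.restrict (Icc t0 t1))) :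
    ∃ L : ℝ, ∀ (y0 : E) (u : ℝ → F) (y : ℝ → E) (ε : ℝ),
      IsMildSolution t0 t1 a (fun s => b s (u s)) y0 y → ‖y0‖ ≤ ε →
      (∀ᵐ t ∂(volume.restrict (Icc t0 t1)), ‖u t‖ ≤ ε) →
      ∀ᵐ t ∂(volume.restrict (Icc t0 t1)), ‖c t (y t) + d t (u t)‖ ≤ L * ε := by
  set μ := volume.restrict (Icc t0 t1)
  set D := (1 + lpNorm b ⊤ μ * (t1 - t0)) * Real.exp (lpNorm a ⊤ μ * (t1 - t0)) with hD
  refine ⟨lpNorm c ⊤ μ * D + lpNorm d ⊤ μ, fun y0 u y ε hy hy0 hu => ?_⟩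
  have hε : 0 ≤ ε := (norm_nonneg y0).trans hy0
  have hbu : ∀ᵐ t ∂μ, ‖b t (u t)‖ ≤ lpNorm b ⊤ μ * ε := by
    filter_upwards [ae_le_lpNorm_exponent_top hb, hu] with t hbt hut
    exact (b t).le_of_opNorm_le_of_le hbt hut
  have hyD : ∀ t ∈ Icc t0 t1, ‖y t‖ ≤ D * ε := fun t ht =>
    calc ‖y t‖ ≤ (‖y0‖ + lpNorm b ⊤ μ * ε * (t1 - t0)) * Real.exp (lpNorm a ⊤ μ * (t1 - t0)) :=
          hy.norm_le_exp lpNorm_nonneg (mul_nonneg lpNorm_nonneg hε)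
            (ae_le_lpNorm_exponent_top ha) hbu ht
      _ ≤ (ε + lpNorm b ⊤ μ * ε * (t1 - t0)) * Real.exp (lpNorm a ⊤ μ * (t1 - t0)) := by gcongr
      _ = D * ε := by rw [hD]; ring
  filter_upwards [ae_le_lpNorm_exponent_top hc, ae_le_lpNorm_exponent_top hd, hu,
    ae_restrict_mem measurableSet_Icc] with t hct hdt hut ht
  calc ‖c t (y t) + d t (u t)‖ ≤ lpNorm c ⊤ μ * (D * ε) + lpNorm d ⊤ μ * ε :=
        norm_add_le_of_le ((c t).le_of_opNorm_le_of_le hct (hyD t ht))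
          ((d t).le_of_opNorm_le_of_le hdt hut)
    _ = (lpNorm c ⊤ μ * D + lpNorm d ⊤ μ) * ε := by ring

end LinearIntegralEquation

lemma EssBdd.memLp_top {t0 t1 : ℝ} {k : ℕ} {u : ℝ → (Fin k → ℝ)} (hu : EssBdd t0 t1 u)
    (hu_meas : Measurable u) : MemLp u ⊤ (volume.restrict (Icc t0 t1)) :=
  hu.elim fun C hC => memLp_top_of_bound hu_meas.aestronglyMeasurable C hC

section LinearizedProblem

variable {n m : ℕ} {t0 t1 : ℝ} {f : (Fin n → ℝ) → (Fin m → ℝ) → (Fin n → ℝ)}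
  {G : (Fin n → ℝ) → (Fin m → ℝ) → ℝ} {xh : ℝ → (Fin n → ℝ)} {uh : ℝ → (Fin m → ℝ)}
  {A : (Fin n → ℝ) → (ℝ → (Fin m → ℝ)) → ℝ → (Fin n → ℝ)} {M : Set ℝ}

/-- `A` is the operator `(x0,u) ↦ x` of the linearized dynamics
`ẋ = f_x(ŵ)x + f_u(ŵ)u`, `x(t0) = x0`. -/
def IsLinearizedFlow (t0 t1 : ℝ) (f : (Fin n → ℝ) → (Fin m → ℝ) → (Fin n → ℝ))
    (xh : ℝ → (Fin n → ℝ)) (uh : ℝ → (Fin m → ℝ))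
    (A : (Fin n → ℝ) → (ℝ → (Fin m → ℝ)) → ℝ → (Fin n → ℝ)) : Prop :=
  ∀ (x0 : Fin n → ℝ) (u : ℝ → (Fin m → ℝ)), Measurable u → EssBdd t0 t1 u →
    IsMildSolution t0 t1 (fun s => fderiv ℝ (fun x' => f x' (uh s)) (xh s))
      (fun s => (fderiv ℝ (fun u' => f (xh s) u') (uh s)) (u s)) x0 (A x0 u)

/-- The dual cone `H_δ* ⊆ X`, for a constraint set `M` in place of `M_δ`. -/
def dualConeH (t0 t1 : ℝ) (G : (Fin n → ℝ) → (Fin m → ℝ) → ℝ)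
    (xh : ℝ → (Fin n → ℝ)) (uh : ℝ → (Fin m → ℝ))
    (A : (Fin n → ℝ) → (ℝ → (Fin m → ℝ)) → ℝ → (Fin n → ℝ)) (M : Set ℝ) :
    Set ((Fin n → ℝ) × (ℝ → (Fin m → ℝ)) × ℝ) :=
  {κ | Measurable κ.2.1 ∧ EssBdd t0 t1 κ.2.1 ∧
    ∀ lam : ℝ → ℝ, IntegrableOn lam (Icc t0 t1) →
      (∀ᵐ t ∂(volume.restrict (Icc t0 t1)), 0 ≤ lam t) →
      (∀ᵐ t ∂(volume.restrict (Icc t0 t1)), t ∉ M → lam t = 0) →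
      0 ≤ -(∫ t in Icc t0 t1, lam t * (Gexpr G xh uh A κ t + κ.2.2))}

/-- The closure of `s` in the norm of `X = ℝⁿ × L^∞ × ℝ`. Controls are functions rather than
classes, so the distance of the middle components is measured almost everywhere. -/
def normClosure (t0 t1 : ℝ) (s : Set ((Fin n → ℝ) × (ℝ → (Fin m → ℝ)) × ℝ)) :
    Set ((Fin n → ℝ) × (ℝ → (Fin m → ℝ)) × ℝ) :=
  {κ | Measurable κ.2.1 ∧ EssBdd t0 t1 κ.2.1 ∧
    ∀ ε > (0 : ℝ), ∃ κ' ∈ s,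
      ‖κ.1 - κ'.1‖ < ε ∧
      (∀ᵐ t ∂(volume.restrict (Icc t0 t1)), ‖κ.2.1 t - κ'.2.1 t‖ < ε) ∧
      |κ.2.2 - κ'.2.2| < ε}

/-- The cone of all `κ = (x0,u,q) ∈ X` with `G_x(ŵ)x + G_u(ŵ)u + q ≤ 0` a.e. on `M`. -/
def weakConstraintCone (t0 t1 : ℝ) (G : (Fin n → ℝ) → (Fin m → ℝ) → ℝ)
    (xh : ℝ → (Fin n → ℝ)) (uh : ℝ → (Fin m → ℝ))
    (A : (Fin n → ℝ) → (ℝ → (Fin m → ℝ)) → ℝ → (Fin n → ℝ)) (M : Set ℝ) :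
    Set ((Fin n → ℝ) × (ℝ → (Fin m → ℝ)) × ℝ) :=
  {κ | Measurable κ.2.1 ∧ EssBdd t0 t1 κ.2.1 ∧
    ∀ᵐ t ∂(volume.restrict M), Gexpr G xh uh A κ t + κ.2.2 ≤ 0}

namespace IsLinearizedFlow

lemma memLp_top_Gexpr (hA : IsLinearizedFlow t0 t1 f xh uh A)
    (hf : ContDiff ℝ 1 (fun q : (Fin n → ℝ) × (Fin m → ℝ) => f q.1 q.2))
    (hG : ContDiff ℝ 1 (fun q : (Fin n → ℝ) × (Fin m → ℝ) => G q.1 q.2))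
    (hxh : MemLp xh ⊤ (volume.restrict (Icc t0 t1)))
    (huh : MemLp uh ⊤ (volume.restrict (Icc t0 t1)))
    {κ : (Fin n → ℝ) × (ℝ → (Fin m → ℝ)) × ℝ} (hκ : Measurable κ.2.1) (hκb : EssBdd t0 t1 κ.2.1) :
    MemLp (Gexpr G xh uh A κ) ⊤ (volume.restrict (Icc t0 t1)) := by
  have hu := hκb.memLp_top hκ
  have hx : MemLp (A κ.1 κ.2.1) ⊤ (volume.restrict (Icc t0 t1)) :=
    (hA κ.1 κ.2.1 hκ hκb).memLp_top (memLp_top_fderiv_fst hf hxh huh)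
      (memLp_top_clm_apply (memLp_top_fderiv_snd hf hxh huh) hu)
  exact (memLp_top_clm_apply (memLp_top_fderiv_fst hG hxh huh) hx).add
    (memLp_top_clm_apply (memLp_top_fderiv_snd hG hxh huh) hu)

lemma exists_ae_abs_Gexpr_sub_le_mul (hA : IsLinearizedFlow t0 t1 f xh uh A)
    (hf : ContDiff ℝ 1 (fun q : (Fin n → ℝ) × (Fin m → ℝ) => f q.1 q.2))
    (hG : ContDiff ℝ 1 (fun q : (Fin n → ℝ) × (Fin m → ℝ) => G q.1 q.2))
    (hxh : MemLp xh ⊤ (volume.restrict (Icc t0 t1)))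
    (huh : MemLp uh ⊤ (volume.restrict (Icc t0 t1))) :
    ∃ L : ℝ, ∀ (κ κ' : (Fin n → ℝ) × (ℝ → (Fin m → ℝ)) × ℝ) (ε : ℝ),
      Measurable κ.2.1 → EssBdd t0 t1 κ.2.1 → Measurable κ'.2.1 → EssBdd t0 t1 κ'.2.1 →
      ‖κ.1 - κ'.1‖ ≤ ε →
      (∀ᵐ t ∂(volume.restrict (Icc t0 t1)), ‖κ.2.1 t - κ'.2.1 t‖ ≤ ε) →
      ∀ᵐ t ∂(volume.restrict (Icc t0 t1)),
        |Gexpr G xh uh A κ t - Gexpr G xh uh A κ' t| ≤ L * ε := by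
  have hfx := memLp_top_fderiv_fst hf hxh huh
  have hfu := memLp_top_fderiv_snd hf hxh huh
  obtain ⟨L, hL⟩ := exists_ae_norm_output_le_mul hfx hfu (memLp_top_fderiv_fst hG hxh huh)
    (memLp_top_fderiv_snd hG hxh huh)
  refine ⟨L, fun κ κ' ε hκ hκb hκ' hκb' hx0 hu => ?_⟩
  have hsub := (hA κ.1 κ.2.1 hκ hκb).sub (hA κ'.1 κ'.2.1 hκ' hκb') hfx
    (memLp_top_clm_apply hfu (hκb.memLp_top hκ)) (memLp_top_clm_apply hfu (hκb'.memLp_top hκ'))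
  have hsol : IsMildSolution t0 t1 (fun s => fderiv ℝ (fun x' => f x' (uh s)) (xh s))
      (fun s => (fderiv ℝ (fun u' => f (xh s) u') (uh s)) ((κ.2.1 - κ'.2.1) s))
      (κ.1 - κ'.1) (A κ.1 κ.2.1 - A κ'.1 κ'.2.1) := by
    convert hsub using 2 with s
    simp only [Pi.sub_apply, map_sub]
  filter_upwards [hL _ _ _ ε hsol hx0 hu] with t ht
  simpa only [Gexpr, Pi.sub_apply, map_sub, add_sub_add_comm, Real.norm_eq_abs] using ht

end IsLinearizedFlow

lemma weakConstraintCone_subset_normClosure :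
    weakConstraintCone t0 t1 G xh uh A M ⊆ normClosure t0 t1 (OmegaDelta t0 t1 G xh uh A M) := by
  rintro ⟨x0, u, q⟩ ⟨hu, hub, hle⟩
  refine ⟨hu, hub, fun ε hε => ⟨(x0, u, q - ε / 2), ⟨hu, hub, -q, by simp only; linarith, ?_⟩,
    by simpa using hε, ae_of_all _ fun t => by simpa using hε, ?_⟩⟩
  · filter_upwards [hle] with t ht
    exact le_neg_iff_add_nonpos_right.2 ht
  · rw [sub_sub_cancel, abs_of_pos (half_pos hε)]
    exact half_lt_self hε

lemma IsLinearizedFlow.normClosure_subset_weakConstraintCone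
    (hA : IsLinearizedFlow t0 t1 f xh uh A)
    (hf : ContDiff ℝ 1 (fun q : (Fin n → ℝ) × (Fin m → ℝ) => f q.1 q.2))
    (hG : ContDiff ℝ 1 (fun q : (Fin n → ℝ) × (Fin m → ℝ) => G q.1 q.2))
    (hxh : MemLp xh ⊤ (volume.restrict (Icc t0 t1)))
    (huh : MemLp uh ⊤ (volume.restrict (Icc t0 t1))) (hM : M ⊆ Icc t0 t1) :
    normClosure t0 t1 (OmegaDelta t0 t1 G xh uh A M) ⊆ weakConstraintCone t0 t1 G xh uh A M := by
  obtain ⟨L, hL⟩ := hA.exists_ae_abs_Gexpr_sub_le_mul hf hG hxh huh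
  rintro κ ⟨hκ, hκb, happrox⟩
  refine ⟨hκ, hκb, ae_nonpos_of_forall_pos_ae_le_mul (L + 1) fun ε hε => ?_⟩
  obtain ⟨κ', ⟨hκ', hκb', c, hc, hle⟩, hx0, hu, hq⟩ := happrox ε hε
  have hclose := hL κ κ' ε hκ hκb hκ' hκb' hx0.le (hu.mono fun _ ht => ht.le)
  filter_upwards [hle, ae_restrict_of_ae_restrict_of_subset hM hclose] with t hct hLt
  linarith [(abs_le.1 hLt).2, (abs_lt.1 hq).2]

lemma IsLinearizedFlow.dualConeH_eq_weakConstraintCone (hA : IsLinearizedFlow t0 t1 f xh uh A)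
    (hf : ContDiff ℝ 1 (fun q : (Fin n → ℝ) × (Fin m → ℝ) => f q.1 q.2))
    (hG : ContDiff ℝ 1 (fun q : (Fin n → ℝ) × (Fin m → ℝ) => G q.1 q.2))
    (hxh : MemLp xh ⊤ (volume.restrict (Icc t0 t1)))
    (huh : MemLp uh ⊤ (volume.restrict (Icc t0 t1)))
    (hM_meas : NullMeasurableSet M (volume.restrict (Icc t0 t1))) (hM : M ⊆ Icc t0 t1) :
    dualConeH t0 t1 G xh uh A M = weakConstraintCone t0 t1 G xh uh A M := by
  have hrestrict : (volume.restrict (Icc t0 t1)).restrict M = volume.restrict M := by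
    rw [Measure.restrict_restrict₀ hM_meas, inter_eq_left.2 hM]
  ext κ
  refine and_congr_right fun hκ => and_congr_right fun hκb => ?_
  simp only [neg_nonneg, ← hrestrict]
  exact ⟨ae_restrict_nonpos_of_forall_integral_mul_nonpos hM_meas
      (((hA.memLp_top_Gexpr hf hG hxh huh hκ hκb).integrable le_top).add (integrable_const _)),
    fun hp _ _ => integral_mul_nonpos_of_ae_restrict_nonpos hM_meas hp⟩

theorem dual_cone_H_delta_general
    (hf : ContDiff ℝ 1 (fun q : (Fin n → ℝ) × (Fin m → ℝ) => f q.1 q.2))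
    (hG : ContDiff ℝ 1 (fun q : (Fin n → ℝ) × (Fin m → ℝ) => G q.1 q.2))
    (hxh : MemLp xh ⊤ (volume.restrict (Icc t0 t1)))
    (huh : MemLp uh ⊤ (volume.restrict (Icc t0 t1)))
    (hA : IsLinearizedFlow t0 t1 f xh uh A)
    (hM_meas : NullMeasurableSet M (volume.restrict (Icc t0 t1))) (hM : M ⊆ Icc t0 t1) :
    dualConeH t0 t1 G xh uh A M = normClosure t0 t1 (OmegaDelta t0 t1 G xh uh A M) ∧
      normClosure t0 t1 (OmegaDelta t0 t1 G xh uh A M) = weakConstraintCone t0 t1 G xh uh A M := by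
  have hclosure : normClosure t0 t1 (OmegaDelta t0 t1 G xh uh A M)
      = weakConstraintCone t0 t1 G xh uh A M :=
    (hA.normClosure_subset_weakConstraintCone hf hG hxh huh hM).antisymm
      weakConstraintCone_subset_normClosure
  exact ⟨(hA.dualConeH_eq_weakConstraintCone hf hG hxh huh hM_meas hM).trans hclosure.symm,
    hclosure⟩

lemma Admissible.memLp_top_state (h : Admissible t0 t1 f G xh uh) :
    MemLp xh ⊤ (volume.restrict (Icc t0 t1)) := by
  have hcont : ContinuousOn xh (Icc t0 t1) :=
    (continuousOn_const.add (intervalIntegral.continuousOn_primitive_Icc h.2.2.1)).congr h.2.2.2.1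
  obtain ⟨C, hC⟩ := isCompact_Icc.exists_bound_of_continuousOn hcont
  exact memLp_top_of_bound (hcont.aestronglyMeasurable measurableSet_Icc) C
    ((ae_restrict_mem measurableSet_Icc).mono hC)

lemma Admissible.nullMeasurableSet_activeSet (h : Admissible t0 t1 f G xh uh)
    (hG : Continuous (fun q : (Fin n → ℝ) × (Fin m → ℝ) => G q.1 q.2)) (c : ℝ) :
    NullMeasurableSet {t ∈ Icc t0 t1 | c ≤ G (xh t) (uh t)} (volume.restrict (Icc t0 t1)) :=
  measurableSet_Icc.nullMeasurableSet.inter (nullMeasurableSet_le aemeasurable_const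
    (hG.comp_aestronglyMeasurable
      (h.memLp_top_state.1.prodMk h.1.aestronglyMeasurable)).aemeasurable)

end LinearizedProblem

/-- the dual cone of `H_δ` equals the norm-closure of `Ω_δ`, which is the
set `{κ : esssup_{M_δ}(G_x(ŵ)x + G_u(ŵ)u) + q ≤ 0}`.  The cone `H_δ ⊆ Y` consists of the
functionals `κ ↦ -∫ λ(t)(G_x(ŵ)x + G_u(ŵ)u + q)dt` over nonnegative `λ ∈ L¹` vanishing
outside `M_δ`; its dual cone is accordingly the set of all `κ ∈ X` on which every such
functional is nonnegative.  The norm-closure of `Ω_δ` in `X = ℝⁿ × L^∞ × ℝ` is expressed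
by `ε`-approximation in each component (with the `L^∞` distance on the middle one). -/
theorem dual_cone_H_delta {n m : ℕ} (t0 t1 : ℝ) (ht : t0 < t1)
    (f : (Fin n → ℝ) → (Fin m → ℝ) → (Fin n → ℝ))
    (G : (Fin n → ℝ) → (Fin m → ℝ) → ℝ)
    (hf : ContDiff ℝ 1 (fun q : (Fin n → ℝ) × (Fin m → ℝ) => f q.1 q.2))
    (hG : ContDiff ℝ 1 (fun q : (Fin n → ℝ) × (Fin m → ℝ) => G q.1 q.2))
    (xh : ℝ → (Fin n → ℝ)) (uh : ℝ → (Fin m → ℝ))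
    (hadm : Admissible t0 t1 f G xh uh)
    (A : (Fin n → ℝ) → (ℝ → (Fin m → ℝ)) → ℝ → (Fin n → ℝ))
    (hA : ∀ (x0 : Fin n → ℝ) (u : ℝ → (Fin m → ℝ)), Measurable u → EssBdd t0 t1 u →
      ∀ t ∈ Icc t0 t1, A x0 u t = x0 + ∫ s in Icc t0 t,
        ((fderiv ℝ (fun x' => f x' (uh s)) (xh s)) (A x0 u s)
          + (fderiv ℝ (fun u' => f (xh s) u') (uh s)) (u s)))
    (δ : ℝ) (hδ : 0 < δ)
    (Mδ : Set ℝ) (hMδ : Mδ = {t ∈ Icc t0 t1 | -δ ≤ G (xh t) (uh t)})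
    (hMδpos : 0 < volume Mδ) :
    -- the dual cone of `H_δ` ...
    {κ : (Fin n → ℝ) × (ℝ → (Fin m → ℝ)) × ℝ |
        Measurable κ.2.1 ∧ EssBdd t0 t1 κ.2.1 ∧
        ∀ lam : ℝ → ℝ, IntegrableOn lam (Icc t0 t1) →
          (∀ᵐ t ∂(volume.restrict (Icc t0 t1)), 0 ≤ lam t) →
          (∀ᵐ t ∂(volume.restrict (Icc t0 t1)), t ∉ Mδ → lam t = 0) →
          0 ≤ -(∫ t in Icc t0 t1, lam t * (Gexpr G xh uh A κ t + κ.2.2))}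
      -- ... equals the norm-closure of `Ω_δ` ...
      = {κ : (Fin n → ℝ) × (ℝ → (Fin m → ℝ)) × ℝ |
          Measurable κ.2.1 ∧ EssBdd t0 t1 κ.2.1 ∧
          ∀ ε > (0:ℝ), ∃ κ' ∈ OmegaDelta t0 t1 G xh uh A Mδ,
            ‖κ.1 - κ'.1‖ < ε ∧
            (∀ᵐ t ∂(volume.restrict (Icc t0 t1)), ‖κ.2.1 t - κ'.2.1 t‖ < ε) ∧
            |κ.2.2 - κ'.2.2| < ε}
      -- ... and both equal the explicit description of `cl Ω_δ`:
      ∧ {κ : (Fin n → ℝ) × (ℝ → (Fin m → ℝ)) × ℝ |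
          Measurable κ.2.1 ∧ EssBdd t0 t1 κ.2.1 ∧
          ∀ ε > (0:ℝ), ∃ κ' ∈ OmegaDelta t0 t1 G xh uh A Mδ,
            ‖κ.1 - κ'.1‖ < ε ∧
            (∀ᵐ t ∂(volume.restrict (Icc t0 t1)), ‖κ.2.1 t - κ'.2.1 t‖ < ε) ∧
            |κ.2.2 - κ'.2.2| < ε}
        = {κ : (Fin n → ℝ) × (ℝ → (Fin m → ℝ)) × ℝ |
            Measurable κ.2.1 ∧ EssBdd t0 t1 κ.2.1 ∧
            ∀ᵐ t ∂(volume.restrict Mδ), Gexpr G xh uh A κ t + κ.2.2 ≤ 0} := by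
  subst hMδ
  exact dual_cone_H_delta_general hf hG hadm.memLp_top_state (hadm.2.1.memLp_top hadm.1) hA
    (hadm.nullMeasurableSet_activeSet hG.continuous (-δ)) (sep_subset _ _)
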